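/- arXiv:1308.0758 — 8 statements merged into one kernel-verified Lean document; each statement's English description precedes it below -/
import Mathlib

section
/- A ring R is right small dual if and only if r(l(T) ∩ Rb) = T + r(b) for every small right ideal T of R and every element b ∈ R. -/
/-!
Fix `b` and let `f` be left multiplication by `b`. Since `s * b` kills `X` exactly when `s` kills
`f(X)`, one has `r(l(X) ∩ Rb) = f⁻¹(rl(f(X)))` for every `X ⊆ R`. On the other hand
`X + r(b) = X + ker f = f⁻¹(f(X))`. So the condition on `T` and `b` says
`f⁻¹(rl(f(T))) = f⁻¹(f(T))`: it follows from `rl(f(T)) = f(T)`, as images of small submodules are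
small, and for `b = 1` it is `rl(T) = T`.
-/

open Pointwise

/-- The left annihilator `l(X) = {r : ∀ x ∈ X, r * x = 0}` of a subset of a ring. -/
def lAnn (R : Type*) [Ring R] (X : Set R) : Set R := {r : R | ∀ x ∈ X, r * x = 0}

/-- The right annihilator `r(X) = {r : ∀ x ∈ X, x * r = 0}` of a subset of a ring. -/
def rAnn (R : Type*) [Ring R] (X : Set R) : Set R := {r : R | ∀ x ∈ X, x * r = 0}

/-- A right ideal of `R` (a submodule of `R` as a right `R`-module, i.e. an
`Rᵐᵒᵖ`-submodule) is small if `I + K ≠ R` for every proper right ideal `K`. -/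
def IsSmallRightIdeal (R : Type*) [Ring R] (I : Submodule Rᵐᵒᵖ R) : Prop :=
  ∀ K : Submodule Rᵐᵒᵖ R, K ≠ ⊤ → I ⊔ K ≠ ⊤

/-- A left ideal of `R` is small if `I + K ≠ R` for every proper left ideal `K`. -/
def IsSmallLeftIdeal (R : Type*) [Ring R] (I : Ideal R) : Prop :=
  ∀ K : Ideal R, K ≠ ⊤ → I ⊔ K ≠ ⊤

/-- `R` is right small dual if `rl(I) = I` for every small right ideal `I`. -/
def IsRightSmallDual (R : Type*) [Ring R] : Prop :=
  ∀ I : Submodule Rᵐᵒᵖ R, IsSmallRightIdeal R I → rAnn R (lAnn R (I : Set R)) = (I : Set R)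

/-- `R` is left small dual if `lr(I) = I` for every small left ideal `I`. -/
def IsLeftSmallDual (R : Type*) [Ring R] : Prop :=
  ∀ I : Ideal R, IsSmallLeftIdeal R I → lAnn R (rAnn R (I : Set R)) = (I : Set R)

/-- `R` is right dual if `rl(I) = I` for every right ideal `I`. -/
def IsRightDual (R : Type*) [Ring R] : Prop :=
  ∀ I : Submodule Rᵐᵒᵖ R, rAnn R (lAnn R (I : Set R)) = (I : Set R)

/-- `R` is left dual if `lr(I) = I` for every left ideal `I`. -/
def IsLeftDual (R : Type*) [Ring R] : Prop :=
  ∀ I : Ideal R, lAnn R (rAnn R (I : Set R)) = (I : Set R)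

/-- A right `R`-module is torsionless if its nonzero elements are separated by
right `R`-linear maps to `R`. -/
def IsTorsionlessRight (R : Type*) [Ring R] (M : Type*) [AddCommGroup M] [Module Rᵐᵒᵖ M] : Prop :=
  ∀ m : M, m ≠ 0 → ∃ f : M →ₗ[Rᵐᵒᵖ] R, f m ≠ 0

/-- The left annihilator of a subset, as a left ideal. -/
def lAnnIdeal (R : Type*) [Ring R] (X : Set R) : Ideal R where
  carrier := {r : R | ∀ x ∈ X, r * x = 0}
  add_mem' := fun {a b} ha hb x hx => by rw [add_mul, ha x hx, hb x hx, add_zero]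
  zero_mem' := fun x _ => zero_mul x
  smul_mem' := fun c a ha x hx => by
    simp only [smul_eq_mul, Set.mem_setOf_eq] at *
    rw [mul_assoc, ha x hx, mul_zero]

/-- A right ideal `I` has a weak supplement if there is a right ideal `K` with
`I + K = R` and `I ∩ K` small. -/
def HasWeakSupplementRight (R : Type*) [Ring R] (I : Submodule Rᵐᵒᵖ R) : Prop :=
  ∃ K : Submodule Rᵐᵒᵖ R, I ⊔ K = ⊤ ∧ IsSmallRightIdeal R (I ⊓ K)

/-- A left ideal `I` has a weak supplement if there is a left ideal `K` with
`I + K = R` and `I ∩ K` small. -/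
def HasWeakSupplementLeft (R : Type*) [Ring R] (I : Ideal R) : Prop :=
  ∃ K : Ideal R, I ⊔ K = ⊤ ∧ IsSmallLeftIdeal R (I ⊓ K)

/-- `R` is semilocal if `R/J(R)` is a semisimple ring (equivalently, a semisimple
left `R`-module). -/
def IsSemilocalRing (R : Type*) [Ring R] : Prop :=
  IsSemisimpleModule R (R ⧸ Ideal.jacobson (⊥ : Ideal R))

/-- `R` is semiperfect if it is semilocal and idempotents lift modulo `J(R)`. -/
def IsSemiperfectRing (R : Type*) [Ring R] : Prop :=
  IsSemilocalRing R ∧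
    ∀ a : R, a * a - a ∈ Ideal.jacobson (⊥ : Ideal R) →
      ∃ e : R, e * e = e ∧ e - a ∈ Ideal.jacobson (⊥ : Ideal R)

/-- `R` is `J`-regular if `R/J(R)` is von Neumann regular. -/
def IsJRegular (R : Type*) [Ring R] : Prop :=
  ∀ a : R, ∃ b : R, a * b * a - a ∈ Ideal.jacobson (⊥ : Ideal R)

/-- `R` is left perfect: `R/J(R)` is semisimple and `J(R)` is left T-nilpotent. -/
def IsLeftPerfect (R : Type*) [Ring R] : Prop :=
  IsSemilocalRing R ∧
    ∀ a : ℕ → R, (∀ i, a i ∈ Ideal.jacobson (⊥ : Ideal R)) →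
      ∃ n : ℕ, (List.ofFn fun i : Fin (n + 1) => a i).prod = 0

/-- A right ideal `E` is essential if `E ∩ T ≠ 0` for every nonzero right ideal `T`. -/
def IsEssentialRightIdeal (R : Type*) [Ring R] (E : Submodule Rᵐᵒᵖ R) : Prop :=
  ∀ T : Submodule Rᵐᵒᵖ R, T ≠ ⊥ → E ⊓ T ≠ ⊥

/-- Smallness (superfluity) of a submodule `N` of `M`, in contrapositive form: only `K = M` has
`N + K = M`. It frees `IsSmallRightIdeal` from the ambient module `R`, which makes smallness of
images under linear maps available. -/
def IsSmallSubmodule {S M : Type*} [Semiring S] [AddCommMonoid M] [Module S M]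
    (N : Submodule S M) : Prop :=
  ∀ ⦃K : Submodule S M⦄, Codisjoint N K → K = ⊤

theorem isSmallRightIdeal_iff_isSmallSubmodule {R : Type*} [Ring R] {I : Submodule Rᵐᵒᵖ R} :
    IsSmallRightIdeal R I ↔ IsSmallSubmodule I :=
  forall_congr' fun _ => not_imp_not.trans <| by rw [codisjoint_iff]

section Map

variable {S M M' : Type*} [Semiring S] [AddCommGroup M] [Module S M]
  [AddCommGroup M'] [Module S M']

theorem codisjoint_comap_of_codisjoint_map {f : M →ₗ[S] M'} {N : Submodule S M}
    {K : Submodule S M'} (h : Codisjoint (N.map f) K) : Codisjoint N (K.comap f) := by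
  rw [Submodule.codisjoint_iff_exists_add_eq] at h ⊢
  intro x
  obtain ⟨_, k, ⟨n, hn, rfl⟩, hk, hx⟩ := h (f x)
  refine ⟨n, x - n, hn, ?_, add_sub_cancel n x⟩
  rwa [Submodule.mem_comap, map_sub, ← hx, add_sub_cancel_left]

theorem IsSmallSubmodule.map {N : Submodule S M} (hN : IsSmallSubmodule N) (f : M →ₗ[S] M') :
    IsSmallSubmodule (N.map f) := by
  intro K hK
  have hcomap : K.comap f = ⊤ := hN (codisjoint_comap_of_codisjoint_map hK)
  have hle : N.map f ≤ K := Submodule.map_le_iff_le_comap.2 (hcomap ▸ le_top)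
  exact codisjoint_self.1 (hK.mono_left hle)

end Map

section Annihilator

variable {R : Type*} [Ring R]

theorem mul_mem_lAnn_iff {X : Set R} {b s : R} :
    s * b ∈ lAnn R X ↔ s ∈ lAnn R ((b * ·) '' X) := by
  simp only [lAnn, Set.mem_ofPred_eq, Set.forall_mem_image, mul_assoc]

theorem rAnn_lAnn_inter_range_mul_right (X : Set R) (b : R) :
    rAnn R (lAnn R X ∩ Set.range fun r : R => r * b) =
      (b * ·) ⁻¹' rAnn R (lAnn R ((b * ·) '' X)) := by
  have hinter : (lAnn R X ∩ Set.range fun r : R => r * b) =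
      (· * b) '' lAnn R ((b * ·) '' X) := by
    rw [← Set.image_preimage_eq_inter_range]
    exact congrArg _ (Set.ext fun _ => mul_mem_lAnn_iff)
  ext x
  simp only [hinter, rAnn, Set.mem_preimage, Set.mem_ofPred_eq, Set.forall_mem_image, mul_assoc]

theorem add_rAnn_singleton (X : Set R) (b : R) :
    X + rAnn R {b} = (b * ·) ⁻¹' ((b * ·) '' X) := by
  ext y
  simp only [rAnn, Set.mem_add, Set.mem_preimage, Set.mem_image, Set.mem_ofPred_eq,
    Set.mem_singleton_iff, forall_eq]
  refine exists_congr fun x => and_congr_right fun _ => ?_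
  constructor
  · rintro ⟨z, hz, rfl⟩
    rw [mul_add, hz, add_zero]
  · intro hxy
    exact ⟨y - x, by rw [mul_sub, hxy, sub_self], add_sub_cancel x y⟩

end Annihilator

/-- `R` is right small dual iff `r(l(T) ∩ Rb) = T + r(b)` for every
small right ideal `T` and every `b ∈ R`. -/
theorem isRightSmallDual_iff_rAnn_inter (R : Type*) [Ring R] :
    IsRightSmallDual R ↔
      ∀ T : Submodule Rᵐᵒᵖ R, IsSmallRightIdeal R T → ∀ b : R,
        rAnn R (lAnn R (T : Set R) ∩ Set.range fun r : R => r * b) =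
          (T : Set R) + rAnn R {b} := by
  simp only [rAnn_lAnn_inter_range_mul_right, add_rAnn_singleton]
  constructor
  · intro hR T hT b
    have hsmall : IsSmallRightIdeal R (T.map (LinearMap.mulLeft Rᵐᵒᵖ b)) :=
      isSmallRightIdeal_iff_isSmallSubmodule.2 <|
        (isSmallRightIdeal_iff_isSmallSubmodule.1 hT).map _
    exact congrArg ((b * ·) ⁻¹' ·) (hR _ hsmall)
  · intro h T hT
    simpa using h T hT 1
end

section
/- If R is a right small dual ring, then the Jacobson radical J of R is contained in the left singular ideal Z_l of R. -/
open Pointwise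

/-!
Let `x ∈ J` and let `L` be a left ideal with `l(x) ∩ L = 0`. For `a ∈ L`, an element `r * a` of `L`
vanishes as soon as it annihilates `x`, that is, `l(ax) ⊆ l(a)`. Duality for the right ideal `axR`,
which is small because it lies in `J`, then gives `a ∈ rl(ax) = axR`. So `a (1 - xb) = 0` for some
`b`, and `a = 0` because `1 - xb` is a unit.
-/

section

variable {R : Type*} [Ring R]

theorem exists_mul_one_sub_eq_one_of_mem_jacobson_bot {x : R}
    (hx : x ∈ Ideal.jacobson (⊥ : Ideal R)) : ∃ z : R, z * (1 - x) = 1 := by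
  obtain ⟨z, hz⟩ := Ideal.exists_mul_add_sub_mem_of_mem_jacobson (-x) (neg_mem hx)
  rw [Ideal.mem_bot, sub_eq_zero, neg_add_eq_sub] at hz
  exact ⟨z, hz⟩

theorem isUnit_one_sub_of_mem_jacobson_bot {x : R}
    (hx : x ∈ Ideal.jacobson (⊥ : Ideal R)) : IsUnit (1 - x) := by
  obtain ⟨z, hz⟩ := exists_mul_one_sub_eq_one_of_mem_jacobson_bot hx
  -- `z = 1 + z * x` is again of the form `1 - j` with `j ∈ J`, so it has a left inverse too.
  obtain ⟨w, hw⟩ := exists_mul_one_sub_eq_one_of_mem_jacobson_bot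
    (neg_mem (Ideal.mul_mem_left _ z hx))
  have hz_eq : 1 - -(z * x) = z := by
    rw [← hz]
    noncomm_ring
  rw [hz_eq] at hw
  have hw_eq : w = 1 - x := left_inv_eq_right_inv hw hz
  exact ⟨⟨1 - x, z, hw_eq ▸ hw, hz⟩, rfl⟩

theorem isSmallRightIdeal_of_subset_jacobson_bot {I : Submodule Rᵐᵒᵖ R}
    (hI : (I : Set R) ⊆ Ideal.jacobson (⊥ : Ideal R)) : IsSmallRightIdeal R I := by
  intro K hK hsup
  obtain ⟨i, hi, k, hk, hik⟩ := Submodule.mem_sup.1 (hsup ▸ Submodule.mem_top : (1 : R) ∈ I ⊔ K)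
  obtain ⟨u, hu⟩ := (isUnit_one_sub_of_mem_jacobson_bot (hI hi)).exists_right_inv
  rw [← eq_sub_of_add_eq' hik] at hu
  refine hK ((Submodule.eq_top_iff').2 fun t => ?_)
  have hkut : k * (u * t) ∈ K := K.smul_mem (MulOpposite.op (u * t)) hk
  rwa [← mul_assoc, hu, one_mul] at hkut

theorem span_op_subset_of_isTwoSided {I : Ideal R} [I.IsTwoSided] {X : Set R}
    (hX : X ⊆ I) : (Submodule.span Rᵐᵒᵖ X : Set R) ⊆ I := by
  intro y hy
  induction hy using Submodule.span_induction with
  | mem x hx => exact hX hx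
  | zero => exact I.zero_mem
  | add y z _ _ hy hz => exact I.add_mem hy hz
  | smul b y _ hy => exact I.mul_mem_right b.unop hy

theorem lAnn_span_op (X : Set R) :
    lAnn R (Submodule.span Rᵐᵒᵖ X : Set R) = lAnn R X := by
  refine Set.Subset.antisymm (fun r hr x hx => hr x (Submodule.subset_span hx)) fun r hr y hy => ?_
  induction hy using Submodule.span_induction with
  | mem x hx => exact hr x hx
  | zero => exact mul_zero r
  | add y z _ _ hy hz => rw [mul_add, hy, hz, add_zero]
  | smul b y _ hy => rw [mul_smul_comm, hy, smul_zero]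

theorem IsRightSmallDual.rAnn_lAnn_singleton (h : IsRightSmallDual R) {x : R}
    (hx : x ∈ Ideal.jacobson (⊥ : Ideal R)) :
    rAnn R (lAnn R {x}) = (Submodule.span Rᵐᵒᵖ {x} : Set R) := by
  rw [← lAnn_span_op]
  exact h _ (isSmallRightIdeal_of_subset_jacobson_bot <|
    span_op_subset_of_isTwoSided (Set.singleton_subset_iff.2 hx))

theorem eq_zero_of_mem_span_mul_of_mem_jacobson_bot {a x : R}
    (hx : x ∈ Ideal.jacobson (⊥ : Ideal R)) (ha : a ∈ Submodule.span Rᵐᵒᵖ {a * x}) : a = 0 := by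
  obtain ⟨b, hb⟩ := Submodule.mem_span_singleton.1 ha
  have hunit : IsUnit (1 - x * b.unop) :=
    isUnit_one_sub_of_mem_jacobson_bot (Ideal.mul_mem_right b.unop _ hx)
  have hmul : a * (1 - x * b.unop) = 0 := by
    rw [mul_sub, mul_one, ← mul_assoc, ← MulOpposite.smul_eq_mul_unop, hb, sub_self]
  exact hunit.mul_left_eq_zero.1 hmul

theorem mem_rAnn_lAnn_mul_of_inf_eq_bot {a x : R} {L : Ideal R}
    (hL : lAnnIdeal R {x} ⊓ L = ⊥) (ha : a ∈ L) : a ∈ rAnn R (lAnn R {a * x}) := by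
  intro r hr
  have hra : r * a ∈ lAnnIdeal R {x} := by
    rintro _ rfl
    rw [mul_assoc]
    exact hr _ rfl
  exact (Submodule.mem_bot R).1 (hL ▸ ⟨hra, L.mul_mem_left r ha⟩)

end

theorem jacobson_subset_leftSingular_general (R : Type*) [Ring R]
    (h : ∀ x ∈ Ideal.jacobson (⊥ : Ideal R),
      rAnn R (lAnn R {x}) ⊆ (Submodule.span Rᵐᵒᵖ {x} : Set R)) :
    ∀ x ∈ Ideal.jacobson (⊥ : Ideal R),
      ∀ L : Ideal R, L ≠ ⊥ → lAnnIdeal R {x} ⊓ L ≠ ⊥ := by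
  intro x hx L hL hinf
  refine hL ((Submodule.eq_bot_iff L).2 fun a ha => ?_)
  have hmem : a ∈ Submodule.span Rᵐᵒᵖ {a * x} :=
    h (a * x) (Ideal.mul_mem_left _ a hx) (mem_rAnn_lAnn_mul_of_inf_eq_bot hinf ha)
  exact eq_zero_of_mem_span_mul_of_mem_jacobson_bot hx hmem

/-- If `R` is right small dual, then `J ⊆ Z_l`: every element of the
Jacobson radical has essential left annihilator. -/
theorem jacobson_subset_leftSingular (R : Type*) [Ring R] (h : IsRightSmallDual R) :
    ∀ x ∈ Ideal.jacobson (⊥ : Ideal R),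
      ∀ L : Ideal R, L ≠ ⊥ → lAnnIdeal R {x} ⊓ L ≠ ⊥ :=
  jacobson_subset_leftSingular_general R fun _ hx => (h.rAnn_lAnn_singleton hx).subset
end

section
/- If R is a right small dual ring, then rl(T) = T for every finitely generated semisimple right ideal T of R (i.e., every right ideal that is a finite sum of minimal right ideals). -/
open Pointwise

/-! If `T` is not small, choose a proper right ideal `K` with `T + K = R` and write `1 = e + k` with
`e ∈ T` and `k ∈ K`. Then `(1 - e)T = kT ⊆ T ∩ K`, and `T ∩ K` is strictly smaller than `T` because
`K` is proper. Left multiplication by `1 - e` maps `rl(T)` into `rl((1 - e)T)`, so once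
`rl((1 - e)T) ⊆ T` is known, every `x ∈ rl(T)` is the sum of `(1 - e)x ∈ T` and `ex ∈ T`. Hence the
descending chain condition below `T` reduces the claim to the small case. -/

theorem acc_lt_of_isArtinian {S M : Type*} [Semiring S] [AddCommMonoid M] [Module S M]
    (N : Submodule S M) [IsArtinian S N] : Acc (· < ·) N := by
  let mapSubtype : InitialSeg (α := Submodule S N) (β := Submodule S M) (· < ·) (· < ·) :=
    { (Submodule.MapSubtype.orderEmbedding N).ltEmbedding with
      mem_range_of_rel' := fun P Q hQ =>
        have hQN : Q ≤ N := hQ.le.trans (Submodule.map_subtype_le N P)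
        ⟨Q.comap N.subtype, Submodule.map_comap_eq_of_le (by simpa using hQN)⟩ }
  have map_top : mapSubtype ⊤ = N := Submodule.map_subtype_top N
  exact map_top ▸ (mapSubtype.acc ⊤).mp (wellFounded_lt.apply ⊤)

section

variable {R : Type*} [Ring R]

theorem subset_rAnn_lAnn (X : Set R) : X ⊆ rAnn R (lAnn R X) :=
  fun x hx _ hr => hr x hx

theorem mul_mem_rAnn_lAnn_smul {X : Set R} {x : R} (hx : x ∈ rAnn R (lAnn R X)) (c : R) :
    c * x ∈ rAnn R (lAnn R (c • X)) := by
  intro r hr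
  have hrc : r * c ∈ lAnn R X := fun t ht => by
    rw [mul_assoc]
    exact hr _ (Set.smul_mem_smul_set ht)
  rw [← mul_assoc]
  exact hx _ hrc

theorem mul_mem_of_mem_rightIdeal {T : Submodule Rᵐᵒᵖ R} {a : R} (ha : a ∈ T) (r : R) :
    a * r ∈ T :=
  T.smul_mem (.op r) ha

theorem rAnn_lAnn_subset_of_one_sub_smul {T : Submodule Rᵐᵒᵖ R} {e : R} (he : e ∈ T)
    (hT : rAnn R (lAnn R ((1 - e) • (T : Set R))) ⊆ T) : rAnn R (lAnn R (T : Set R)) ⊆ T := by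
  intro x hx
  have hx' : (1 - e) * x ∈ T := hT (mul_mem_rAnn_lAnn_smul hx _)
  have x_eq : x = (1 - e) * x + e * x := by rw [← add_mul, sub_add_cancel, one_mul]
  rw [x_eq]
  exact T.add_mem hx' (mul_mem_of_mem_rightIdeal he x)

theorem exists_one_sub_smul_lt_of_not_isSmallRightIdeal {T : Submodule Rᵐᵒᵖ R}
    (hT : ¬ IsSmallRightIdeal R T) : ∃ e ∈ T, (1 - e) • T < T := by
  obtain ⟨K, hK, hTK⟩ : ∃ K : Submodule Rᵐᵒᵖ R, K ≠ ⊤ ∧ T ⊔ K = ⊤ := by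
    simpa [IsSmallRightIdeal] using hT
  obtain ⟨e, he, k, hk, hek⟩ : ∃ e ∈ T, ∃ k ∈ K, e + k = 1 :=
    Submodule.mem_sup.mp (hTK ▸ Submodule.mem_top)
  have smul_le : (1 - e) • T ≤ T ⊓ K := by
    rintro _ ⟨t, ht, rfl⟩
    change (1 - e) * t ∈ T ⊓ K
    constructor
    · rw [sub_mul, one_mul]
      exact T.sub_mem ht (mul_mem_of_mem_rightIdeal he t)
    · rw [← hek, add_sub_cancel_left]
      exact mul_mem_of_mem_rightIdeal hk t
  have inf_lt : T ⊓ K < T :=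
    inf_lt_left.mpr fun hle => hK (by rwa [sup_eq_right.mpr hle] at hTK)
  exact ⟨e, he, smul_le.trans_lt inf_lt⟩

theorem rAnn_lAnn_subset_of_acc (h : IsRightSmallDual R) {T : Submodule Rᵐᵒᵖ R}
    (hT : Acc (· < ·) T) : rAnn R (lAnn R (T : Set R)) ⊆ T := by
  induction hT with
  | intro T _ ih =>
    by_cases small : IsSmallRightIdeal R T
    · exact (h T small).subset
    · obtain ⟨e, he, hlt⟩ := exists_one_sub_smul_lt_of_not_isSmallRightIdeal small
      refine rAnn_lAnn_subset_of_one_sub_smul he ?_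
      rw [← Submodule.coe_pointwise_smul]
      exact (ih _ hlt).trans hlt.le

theorem rAnn_lAnn_of_fg_semisimple_general (h : IsRightSmallDual R) (T : Submodule Rᵐᵒᵖ R)
    [IsArtinian Rᵐᵒᵖ T] : rAnn R (lAnn R (T : Set R)) = (T : Set R) :=
  (rAnn_lAnn_subset_of_acc h (acc_lt_of_isArtinian T)).antisymm (subset_rAnn_lAnn _)

end

/-- If `R` is right small dual, then `rl(T) = T` for every finitely
generated semisimple right ideal `T` (a finite sum of minimal right ideals). -/
theorem rAnn_lAnn_of_fg_semisimple (R : Type*) [Ring R] (h : IsRightSmallDual R)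
    (T : Submodule Rᵐᵒᵖ R)
    (hT : ∃ (n : ℕ) (f : Fin n → Submodule Rᵐᵒᵖ R), (∀ i, IsAtom (f i)) ∧ T = ⨆ i, f i) :
    rAnn R (lAnn R (T : Set R)) = (T : Set R) := by
  obtain ⟨n, f, hf, rfl⟩ := hT
  have isSimple (i : Fin n) : IsSimpleModule Rᵐᵒᵖ (f i) := isSimpleModule_iff_isAtom.mpr (hf i)
  exact rAnn_lAnn_of_fg_semisimple_general h _
end

section
/- Let R be a right small dual ring. Then every left R-linear map from a small principal left ideal Rt of R to R is given by right multiplication by some element c ∈ R; in particular, R is left mininjective. -/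
open Pointwise

/-!
If `Rt` is small, then `t` lies in the Jacobson radical, which is two-sided, so `tR` is a small
right ideal. For `f : Rt → R`, the element `f t` is killed by `l(t)`, hence lies in `rl(tR) = tR`;
writing `f t = t c` shows that `f` is right multiplication by `c`. A minimal left ideal is either
small, and then of the form `Rt`, or a direct summand of `R`, and then every map from it extends
to `R`.
-/

theorem forall_sup_ne_top_or_exists_isCompl_of_isAtom {α : Type*} [Lattice α] [BoundedOrder α]
    {a : α} (ha : IsAtom a) : (∀ b, b ≠ ⊤ → a ⊔ b ≠ ⊤) ∨ ∃ b, IsCompl a b := by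
  by_contra! h
  obtain ⟨⟨b, hb, hsup⟩, hcompl⟩ := h
  refine hcompl b ⟨ha.not_le_iff_disjoint.1 fun hab => hb ?_, codisjoint_iff.2 hsup⟩
  rwa [sup_eq_right.2 hab] at hsup

section Ring

variable {R : Type*} [Ring R]

theorem exists_mul_eq_one_of_sub_one_mem_jacobson {r : R} (hr : r - 1 ∈ Ring.jacobson R) :
    ∃ s, s * r = 1 := by
  rw [← Ideal.jacobson_bot] at hr
  simpa only [Ideal.mem_bot, sub_eq_zero] using
    Ideal.exists_mul_sub_mem_of_sub_one_mem_jacobson r hr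

theorem isUnit_of_sub_one_mem_jacobson {r : R} (hr : r - 1 ∈ Ring.jacobson R) : IsUnit r := by
  obtain ⟨s, hsr⟩ := exists_mul_eq_one_of_sub_one_mem_jacobson hr
  -- The left inverse `s` is again congruent to `1`, so it has a left inverse too.
  have hs : s - 1 ∈ Ring.jacobson R := by
    have hs_eq : s - 1 = -s * (r - 1) := by rw [neg_mul, mul_sub, hsr, mul_one, neg_sub]
    exact hs_eq ▸ Ideal.mul_mem_left _ _ hr
  obtain ⟨u, hus⟩ := exists_mul_eq_one_of_sub_one_mem_jacobson hs
  obtain rfl : u = r := left_inv_eq_right_inv hus hsr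
  exact ⟨⟨u, s, hus, hsr⟩, rfl⟩

theorem IsSmallLeftIdeal.le_jacobson {I : Ideal R} (hI : IsSmallLeftIdeal R I) :
    I ≤ Ring.jacobson R :=
  le_sInf fun M hM => by
    by_contra hIM
    exact hI M hM.ne_top (codisjoint_iff.1 (hM.not_le_iff_codisjoint.1 hIM).symm)

theorem isSmallRightIdeal_of_subset_jacobson {I : Submodule Rᵐᵒᵖ R}
    (hI : (I : Set R) ⊆ Ring.jacobson R) : IsSmallRightIdeal R I := by
  intro K hK hsup
  have hone : (1 : R) ∈ I ⊔ K := hsup ▸ Submodule.mem_top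
  obtain ⟨x, hx, k, hk, hxk⟩ := Submodule.mem_sup.1 hone
  have hk_sub : k - 1 ∈ Ring.jacobson R := by
    rw [← hxk, sub_add_cancel_right]
    exact neg_mem (hI hx)
  obtain ⟨u, rfl⟩ := isUnit_of_sub_one_mem_jacobson hk_sub
  refine hK (Submodule.eq_top_iff'.2 fun y => ?_)
  simpa using K.smul_mem (MulOpposite.op (↑u⁻¹ * y)) hk

theorem span_mulOpposite_subset_of_isTwoSided {I : Ideal R} [I.IsTwoSided] {s : Set R}
    (hs : s ⊆ I) : (Submodule.span Rᵐᵒᵖ s : Set R) ⊆ I := by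
  intro x hx
  induction hx using Submodule.span_induction with
  | mem x hx => exact hs hx
  | zero => exact I.zero_mem
  | add x y _ _ hx hy => exact I.add_mem hx hy
  | smul a x _ hx => exact I.mul_mem_right a.unop hx

theorem IsSmallLeftIdeal.isSmallRightIdeal_span {I : Ideal R} (hI : IsSmallLeftIdeal R I)
    {s : Set R} (hs : s ⊆ I) : IsSmallRightIdeal R (Submodule.span Rᵐᵒᵖ s) :=
  isSmallRightIdeal_of_subset_jacobson
    (span_mulOpposite_subset_of_isTwoSided (hs.trans hI.le_jacobson))

theorem map_mem_rAnn_lAnn {I : Ideal R} (f : I →ₗ[R] R) {X : Set R} {x : I} (hx : (x : R) ∈ X) :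
    f x ∈ rAnn R (lAnn R X) := by
  intro r hr
  have hrx : r • x = 0 := Subtype.ext (hr x hx)
  rw [← smul_eq_mul, ← map_smul, hrx, map_zero]

/-- Every left `R`-linear map `I → R` is right multiplication by an element of `R`; equivalently,
it extends to `R`. A ring is left mininjective when this holds for its minimal left ideals. -/
def HomsAreRightMul (I : Ideal R) : Prop :=
  ∀ f : I →ₗ[R] R, ∃ c : R, ∀ x : I, f x = (x : R) * c

theorem homsAreRightMul_span_singleton {t : R}
    (ht : rAnn R (lAnn R (Submodule.span Rᵐᵒᵖ {t} : Set R)) ⊆ Submodule.span Rᵐᵒᵖ {t}) :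
    HomsAreRightMul (Ideal.span {t}) := by
  intro f
  let t' : Ideal.span {t} := ⟨t, Ideal.mem_span_singleton_self t⟩
  have hft : f t' ∈ Submodule.span Rᵐᵒᵖ {t} :=
    ht (map_mem_rAnn_lAnn f (Submodule.mem_span_singleton_self t))
  obtain ⟨c, hc⟩ := Submodule.mem_span_singleton.1 hft
  refine ⟨c.unop, fun ⟨x, hx⟩ => ?_⟩
  obtain ⟨r, rfl⟩ := Ideal.mem_span_singleton'.1 hx
  calc f ⟨r * t, hx⟩ = r * f t' := f.map_smul r t'
    _ = r * (t * c.unop) := by rw [← hc, MulOpposite.smul_eq_mul_unop]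
    _ = r * t * c.unop := (mul_assoc _ _ _).symm

theorem homsAreRightMul_of_isCompl {I K : Ideal R} (hIK : IsCompl I K) : HomsAreRightMul I := by
  intro f
  let g : R →ₗ[R] R := LinearMap.ofIsCompl hIK f 0
  refine ⟨g 1, fun x => ?_⟩
  calc f x = g x := (LinearMap.ofIsCompl_apply_left hIK x).symm
    _ = x * g 1 := by rw [← smul_eq_mul, ← map_smul, smul_eq_mul, mul_one]

theorem exists_eq_span_singleton_of_isAtom {I : Ideal R} (hI : IsAtom I) :
    ∃ t, I = Ideal.span {t} := by
  obtain ⟨t, htI, ht0⟩ := Submodule.exists_mem_ne_zero_of_ne_bot hI.ne_bot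
  have hle : Ideal.span {t} ≤ I := (Ideal.span_singleton_le_iff_mem I).2 htI
  exact ⟨t, ((hI.ne_bot_iff_eq hle).1 (mt Ideal.span_singleton_eq_bot.1 ht0)).symm⟩

theorem homsAreRightMul_of_isAtom
    (h : ∀ t : R, IsSmallLeftIdeal R (Ideal.span {t}) → HomsAreRightMul (Ideal.span {t}))
    {I : Ideal R} (hI : IsAtom I) : HomsAreRightMul I := by
  obtain hsmall | ⟨K, hIK⟩ := forall_sup_ne_top_or_exists_isCompl_of_isAtom hI
  · obtain ⟨t, rfl⟩ := exists_eq_span_singleton_of_isAtom hI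
    exact h t hsmall
  · exact homsAreRightMul_of_isCompl hIK

theorem smallPrincipal_maps_are_mul_and_left_mininjective_general
    (h : ∀ t : R, IsSmallRightIdeal R (Submodule.span Rᵐᵒᵖ {t}) →
      rAnn R (lAnn R (Submodule.span Rᵐᵒᵖ {t} : Set R)) = Submodule.span Rᵐᵒᵖ {t}) :
    (∀ t : R, IsSmallLeftIdeal R (Ideal.span {t}) → HomsAreRightMul (Ideal.span {t})) ∧
      ∀ I : Ideal R, IsAtom I → HomsAreRightMul I := by
  have hprincipal (t : R) (ht : IsSmallLeftIdeal R (Ideal.span {t})) :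
      HomsAreRightMul (Ideal.span {t}) :=
    homsAreRightMul_span_singleton (h t (ht.isSmallRightIdeal_span Ideal.subset_span)).subset
  exact ⟨hprincipal, fun _ => homsAreRightMul_of_isAtom hprincipal⟩

end Ring

/-- If `R` is right small dual, then every left `R`-linear map from a
small principal left ideal `Rt` to `R` is right multiplication by some `c ∈ R`; in
particular `R` is left mininjective (the same holds for maps from minimal left ideals). -/
theorem smallPrincipal_maps_are_mul_and_left_mininjective (R : Type*) [Ring R]
    (h : IsRightSmallDual R) :
    (∀ t : R, IsSmallLeftIdeal R (Ideal.span {t}) →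
      ∀ f : (Ideal.span {t} : Ideal R) →ₗ[R] R,
        ∃ c : R, ∀ x : (Ideal.span {t} : Ideal R), f x = (x : R) * c) ∧
    (∀ I : Ideal R, IsAtom I →
      ∀ f : I →ₗ[R] R, ∃ c : R, ∀ x : I, f x = (x : R) * c) :=
  smallPrincipal_maps_are_mul_and_left_mininjective_general fun _ ht => h _ ht
end

section
/- For a ring R the following are equivalent: (1) R is semilocal; (2) every right ideal of R has a weak supplement in R; (3) every left ideal of R has a weak supplement in R. -/
open Pointwise

/-!
In a coatomic lattice with radical `r` (the infimum of the coatoms), an element is superfluous iff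
it lies below `r`. If the lattice is also modular, a weak supplement of `a` is, up to joining with
`r`, a complement of `a ⊔ r` in the interval `[r, ⊤]`. For the submodules of a module `M` with
radical `J(M)` that interval is the submodule lattice of `M ⧸ J(M)`, so every submodule has a weak
supplement iff `M ⧸ J(M)` is semisimple. For `M = R` this is the equivalence for left ideals. Right
ideals of `R` are left ideals of `Rᵐᵒᵖ`, and being semilocal passes to `Rᵐᵒᵖ` because `J(R)` is
left-right symmetric (`1 - ab` is a unit iff `1 - ba` is) and the opposite of a semisimple ring is
semisimple.
-/

section Lattice

variable {α β : Type*}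

/-- An element `a` of a lattice is superfluous (or small) if `a ⊔ b = ⊤` only for `b = ⊤`. For
`α = Submodule S M` this is the notion of a small submodule. -/
def IsSuperfluous [SemilatticeSup α] [OrderTop α] (a : α) : Prop :=
  ∀ b : α, b ≠ ⊤ → a ⊔ b ≠ ⊤

/-- A lattice is weakly supplemented if every `a` has a weak supplement: some `b` with `a ⊔ b = ⊤`
and `a ⊓ b` superfluous. For `α = Submodule S M` this says that the module `M` is weakly
supplemented. -/
def IsWeaklySupplemented (α : Type*) [Lattice α] [OrderTop α] : Prop :=
  ∀ a : α, ∃ b : α, a ⊔ b = ⊤ ∧ IsSuperfluous (a ⊓ b)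

theorem isSuperfluous_orderIso_apply_iff [SemilatticeSup α] [OrderTop α] [SemilatticeSup β]
    [OrderTop β] (e : α ≃o β) {a : α} : IsSuperfluous (e a) ↔ IsSuperfluous a := by
  simp only [IsSuperfluous, e.surjective.forall, ← map_sup, ne_eq, map_eq_top_iff]

theorem isWeaklySupplemented_congr [Lattice α] [OrderTop α] [Lattice β] [OrderTop β]
    (e : α ≃o β) : IsWeaklySupplemented α ↔ IsWeaklySupplemented β := by
  simp only [IsWeaklySupplemented, e.surjective.forall, e.surjective.exists, ← map_sup, ← map_inf,
    map_eq_top_iff, isSuperfluous_orderIso_apply_iff]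

theorem isSuperfluous_iff_le_radical [CompleteLattice α] [IsCoatomic α] {a : α} :
    IsSuperfluous a ↔ a ≤ Order.radical α := by
  refine ⟨fun ha => le_iInf₂ fun m hm => ?_, fun ha b hb hab => hb ?_⟩
  · by_contra ham
    exact ha m hm.1 (hm.2 _ (right_lt_sup.2 ham))
  · refine Order.radical_nongenerating (top_le_iff.1 ?_)
    rw [← hab, sup_comm]
    gcongr

theorem complementedLattice_Ici_iff [Lattice α] [BoundedOrder α] [IsModularLattice α] {r : α} :
    ComplementedLattice (Set.Ici r) ↔ ∀ a : α, ∃ b : α, a ⊔ b = ⊤ ∧ a ⊓ b ≤ r := by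
  have isCompl_Ici_iff {a b : Set.Ici r} : IsCompl a b ↔ (a : α) ⊓ b ≤ r ∧ (a : α) ⊔ b = ⊤ := by
    rw [isCompl_iff, disjoint_iff_inf_le, codisjoint_iff]
    exact and_congr Iff.rfl Subtype.ext_iff
  constructor
  · intro h a
    obtain ⟨⟨b, hb⟩, hab⟩ := exists_isCompl (⟨a ⊔ r, le_sup_right⟩ : Set.Ici r)
    obtain ⟨hinf, hsup⟩ := isCompl_Ici_iff.1 hab
    refine ⟨b, ?_, (inf_le_inf_right b le_sup_left).trans hinf⟩
    rwa [sup_assoc, sup_eq_right.2 (Set.mem_Ici.1 hb)] at hsup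
  · refine fun h => ⟨fun ⟨a, ha⟩ => ?_⟩
    obtain ⟨b, hsup, hinf⟩ := h a
    refine ⟨⟨b ⊔ r, le_sup_right⟩, isCompl_Ici_iff.2 ⟨?_, ?_⟩⟩
    · rw [← inf_sup_assoc_of_le b ha]
      exact sup_le hinf le_rfl
    · rw [← sup_assoc, hsup, top_sup_eq]

theorem isWeaklySupplemented_iff_complementedLattice [CompleteLattice α] [IsModularLattice α]
    [IsCoatomic α] :
    IsWeaklySupplemented α ↔ ComplementedLattice (Set.Ici (Order.radical α)) := by
  simp only [IsWeaklySupplemented, isSuperfluous_iff_le_radical, complementedLattice_Ici_iff]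

end Lattice

theorem isWeaklySupplemented_submodule_iff {S M : Type*} [Ring S] [AddCommGroup M] [Module S M]
    [IsCoatomic (Submodule S M)] :
    IsWeaklySupplemented (Submodule S M) ↔ IsSemisimpleModule S (M ⧸ Module.jacobson S M) := by
  have radical_eq : Order.radical (Submodule S M) = Module.jacobson S M := sInf_eq_iInf.symm
  rw [isWeaklySupplemented_iff_complementedLattice, radical_eq, isSemisimpleModule_iff,
    (Submodule.comapMkQRelIso (Module.jacobson S M)).complementedLattice_iff]

section Ring

variable {R : Type*} [Ring R]

theorem isUnit_one_sub_mul_comm {a b : R} : IsUnit (1 - a * b) ↔ IsUnit (1 - b * a) := by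
  -- `1 - a * b` is a unit iff `1` is not in the spectrum of `a * b` over `ℤ`.
  simpa [spectrum.mem_iff] using (spectrum.unit_mem_mul_comm (a := a) (b := b) (r := (1 : ℤˣ))).not

theorem isUnit_one_sub_of_mem_jacobson {x : R} (hx : x ∈ Ring.jacobson R) : IsUnit (1 - x) := by
  have exists_left_inv {j : R} (hj : j ∈ Ring.jacobson R) : ∃ s, s * (1 - j) = 1 := by
    rw [← Ideal.jacobson_bot] at hj
    simpa [sub_eq_zero, neg_add_eq_sub] using
      Ideal.exists_mul_add_sub_mem_of_mem_jacobson (-j) (neg_mem hj)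
  obtain ⟨s, hs⟩ := exists_left_inv hx
  -- `s` is itself `1 - j` with `j ∈ J(R)`, hence also has a left inverse.
  have hsx : 1 - -(s * x) = s := by rw [← hs]; noncomm_ring
  obtain ⟨t, ht⟩ := exists_left_inv (neg_mem (Ideal.mul_mem_left _ s hx))
  rw [hsx] at ht
  have htx : t = 1 - x := left_inv_eq_right_inv ht hs
  exact ⟨⟨1 - x, s, htx ▸ ht, hs⟩, rfl⟩

theorem mem_jacobson_iff_forall_isUnit_one_sub_mul {x : R} :
    x ∈ Ring.jacobson R ↔ ∀ y, IsUnit (1 - y * x) := by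
  refine ⟨fun hx y => isUnit_one_sub_of_mem_jacobson (Ideal.mul_mem_left _ y hx), fun h => ?_⟩
  rw [← Ideal.jacobson_bot, Ideal.mem_jacobson_iff]
  intro y
  obtain ⟨z, hz⟩ := (h (-y)).exists_left_inv
  refine ⟨z, ?_⟩
  rw [Ideal.mem_bot, ← hz]
  noncomm_ring

theorem op_mem_jacobson_iff {x : R} :
    MulOpposite.op x ∈ Ring.jacobson Rᵐᵒᵖ ↔ x ∈ Ring.jacobson R := by
  simp only [mem_jacobson_iff_forall_isUnit_one_sub_mul, MulOpposite.op_surjective.forall,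
    ← MulOpposite.op_mul, ← MulOpposite.op_one, ← MulOpposite.op_sub, isUnit_op]
  exact forall_congr' fun y => isUnit_one_sub_mul_comm

theorem ker_op_quotientMk_jacobson :
    RingHom.ker (Ideal.Quotient.mk (Ring.jacobson R)).op = Ring.jacobson Rᵐᵒᵖ := by
  ext x
  rw [← MulOpposite.op_unop x, op_mem_jacobson_iff, RingHom.mem_ker,
    ← Ideal.Quotient.eq_zero_iff_mem]
  exact MulOpposite.op_eq_zero_iff _

/-- The isomorphism `Rᵐᵒᵖ ⧸ J(Rᵐᵒᵖ) ≃ (R ⧸ J(R))ᵐᵒᵖ` induced by the quotient map of `R`; it makes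
semilocality left-right symmetric. -/
noncomputable def quotientJacobsonOpEquiv (R : Type*) [Ring R] :
    Rᵐᵒᵖ ⧸ Ring.jacobson Rᵐᵒᵖ ≃+* (R ⧸ Ring.jacobson R)ᵐᵒᵖ :=
  (Ideal.quotEquivOfEq ker_op_quotientMk_jacobson.symm).trans <|
    RingHom.quotientKerEquivOfSurjective <|
      MulOpposite.op_surjective.comp <|
        Ideal.Quotient.mk_surjective.comp MulOpposite.unop_surjective

theorem isSemisimpleModule_iff_quotient {M : Type*} [AddCommGroup M] [Module R M] (I : Ideal R)
    [I.IsTwoSided] [Module (R ⧸ I) M] [IsScalarTower R (R ⧸ I) M] :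
    IsSemisimpleModule R M ↔ IsSemisimpleModule (R ⧸ I) M := by
  let toQuotient : M →ₛₗ[Ideal.Quotient.mk I] M :=
    { AddMonoidHom.id M with
      map_smul' r m := by
        have mk_eq_smul_one : Ideal.Quotient.mk I r = r • 1 := (mul_one _).symm
        rw [mk_eq_smul_one, smul_one_smul]
        rfl }
  exact toQuotient.isSemisimpleModule_iff_of_bijective Function.bijective_id

theorem isSemilocalRing_iff_isSemisimpleRing :
    IsSemilocalRing R ↔ IsSemisimpleRing (R ⧸ Ring.jacobson R) := by
  rw [IsSemilocalRing, Ideal.jacobson_bot]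
  exact isSemisimpleModule_iff_quotient (Ring.jacobson R)

theorem isSemilocalRing_mulOpposite_iff : IsSemilocalRing Rᵐᵒᵖ ↔ IsSemilocalRing R := by
  rw [isSemilocalRing_iff_isSemisimpleRing, isSemilocalRing_iff_isSemisimpleRing,
    (quotientJacobsonOpEquiv R).isSemisimpleRing_iff, isSemisimpleRing_mulOpposite_iff]

theorem isWeaklySupplemented_ideal_iff : IsWeaklySupplemented (Ideal R) ↔ IsSemilocalRing R := by
  rw [IsSemilocalRing, Ideal.jacobson_bot]
  exact isWeaklySupplemented_submodule_iff

/-- Right ideals of `R`, encoded as `Rᵐᵒᵖ`-submodules of `R`, are the left ideals of `Rᵐᵒᵖ`. -/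
def rightIdealOrderIso (R : Type*) [Ring R] : Submodule Rᵐᵒᵖ R ≃o Ideal Rᵐᵒᵖ :=
  Submodule.orderIsoMapComap (MulOpposite.opLinearEquiv Rᵐᵒᵖ : R ≃ₗ[Rᵐᵒᵖ] Rᵐᵒᵖ)

theorem isWeaklySupplemented_rightIdeal_iff :
    IsWeaklySupplemented (Submodule Rᵐᵒᵖ R) ↔ IsSemilocalRing R := by
  rw [isWeaklySupplemented_congr (rightIdealOrderIso R), isWeaklySupplemented_ideal_iff,
    isSemilocalRing_mulOpposite_iff]

end Ring

/-- `R` is semilocal iff every right ideal has a weak supplement iff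
every left ideal has a weak supplement. -/
theorem semilocal_tfae_weakSupplements (R : Type*) [Ring R] :
    [ IsSemilocalRing R,
      ∀ I : Submodule Rᵐᵒᵖ R, HasWeakSupplementRight R I,
      ∀ I : Ideal R, HasWeakSupplementLeft R I ].TFAE := by
  tfae_have 2 ↔ 1 := isWeaklySupplemented_rightIdeal_iff
  tfae_have 3 ↔ 1 := isWeaklySupplemented_ideal_iff
  tfae_finish
end

section
/- Suppose R is a semiperfect ring such that rl(K) = K for every small right ideal K of R. Then rl(T) = T for every right ideal T of R. -/
open Pointwise

/-!
A right ideal `T` with a weak supplement `K` inherits double-annihilation from the small right ideal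
`T ∩ K`: write `1 = a + b` with `a ∈ T` and `b ∈ K`. Since `b T ⊆ T ∩ K`, any `r ∈ l(T ∩ K)` has
`r b ∈ l(T)`, so `x ∈ rl(T)` gives `b x ∈ rl(T ∩ K) = T ∩ K`, and `x = a x + b x ∈ T`.
Weak supplements exist because `R/J(R)` is semisimple on the right as well as on the left: the
preimage of a complement of the image of `T` meets `T` inside `J(R)`, which is small.
-/

theorem exists_sup_eq_top_and_inf_le_ker {R S M N : Type*} [Ring R] [Ring S] [AddCommGroup M]
    [AddCommGroup N] [Module R M] [Module S N] [IsSemisimpleModule S N] {σ : R →+* S}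
    [RingHomSurjective σ] (f : M →ₛₗ[σ] N) (T : Submodule R M) :
    ∃ K : Submodule R M, T ⊔ K = ⊤ ∧ T ⊓ K ≤ LinearMap.ker f := by
  obtain ⟨C, hC⟩ := exists_isCompl (T.map f)
  refine ⟨C.comap f, eq_top_iff.mpr fun x _ ↦ ?_, fun x ⟨hxT, hxC⟩ ↦ ?_⟩
  · have hfx : f x ∈ T.map f ⊔ C := hC.sup_eq_top ▸ Submodule.mem_top
    obtain ⟨_, ⟨t, ht, rfl⟩, c, hc, htc⟩ := Submodule.mem_sup.mp hfx
    have hxt : x - t ∈ C.comap f := by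
      rwa [Submodule.mem_comap, map_sub, ← htc, add_sub_cancel_left]
    exact Submodule.mem_sup.mpr ⟨t, ht, x - t, hxt, add_sub_cancel t x⟩
  · exact Submodule.disjoint_def.mp hC.disjoint _ (Submodule.mem_map_of_mem hxT) hxC

theorem rightIdeal_mul_mem_right {R : Type*} [Semiring R] (T : Submodule Rᵐᵒᵖ R) {t : R}
    (ht : t ∈ T) (r : R) : t * r ∈ T :=
  T.smul_mem (MulOpposite.op r) ht

theorem rightIdeal_eq_top_of_mul_eq_one {R : Type*} [Semiring R] (T : Submodule Rᵐᵒᵖ R) {u v : R}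
    (hu : u ∈ T) (huv : u * v = 1) : T = ⊤ := by
  refine eq_top_iff.mpr fun x _ ↦ ?_
  rw [← one_mul x, ← huv, mul_assoc]
  exact rightIdeal_mul_mem_right T hu (v * x)

section

variable {R : Type*} [Ring R]

theorem isUnit_of_sub_one_mem_jacobson_bot {r : R}
    (hr : r - 1 ∈ Ideal.jacobson (⊥ : Ideal R)) : IsUnit r := by
  have exists_left_inv {y : R} (hy : y - 1 ∈ Ideal.jacobson (⊥ : Ideal R)) : ∃ z, z * y = 1 := by
    simpa only [Submodule.mem_bot, sub_eq_zero] using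
      Ideal.exists_mul_sub_mem_of_sub_one_mem_jacobson y hy
  obtain ⟨s, hsr⟩ := exists_left_inv hr
  have hs : s - 1 ∈ Ideal.jacobson (⊥ : Ideal R) := by
    have : s - 1 = -s * (r - 1) := by rw [neg_mul, mul_sub, hsr, mul_one, neg_sub]
    exact this ▸ Ideal.mul_mem_left _ _ hr
  obtain ⟨t, hts⟩ := exists_left_inv hs
  have htr : t = r := left_inv_eq_right_inv hts hsr
  exact ⟨⟨r, s, htr ▸ hts, hsr⟩, rfl⟩

theorem isSemisimpleRing_quotient_of_isSemisimpleModule (I : Ideal R) [I.IsTwoSided]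
    [IsSemisimpleModule R (R ⧸ I)] : IsSemisimpleRing (R ⧸ I) := by
  have : RingHomSurjective (Ideal.Quotient.mk I) := ⟨Ideal.Quotient.mk_surjective⟩
  let e : (R ⧸ I) →ₛₗ[Ideal.Quotient.mk I] (R ⧸ I) :=
    { AddMonoidHom.id (R ⧸ I) with
      map_smul' := fun r x ↦ Submodule.Quotient.induction_on _ x fun _ ↦ rfl }
  exact (e.isSemisimpleModule_iff_of_bijective Function.bijective_id).mp inferInstance

theorem exists_rightIdeal_sup_eq_top_and_inf_subset (I : Ideal R) [I.IsTwoSided]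
    [IsSemisimpleRing (R ⧸ I)] (T : Submodule Rᵐᵒᵖ R) :
    ∃ K : Submodule Rᵐᵒᵖ R, T ⊔ K = ⊤ ∧ ((T ⊓ K : Submodule Rᵐᵒᵖ R) : Set R) ⊆ I := by
  let π : Rᵐᵒᵖ →+* (R ⧸ I)ᵐᵒᵖ := RingHom.op (Ideal.Quotient.mk I)
  have : RingHomSurjective π :=
    ⟨MulOpposite.op_surjective.comp (Ideal.Quotient.mk_surjective.comp MulOpposite.unop_surjective)⟩
  let f : R →ₛₗ[π] (R ⧸ I)ᵐᵒᵖ :=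
    π.toSemilinearMap.comp (MulOpposite.opLinearEquiv Rᵐᵒᵖ : R ≃ₗ[Rᵐᵒᵖ] Rᵐᵒᵖ).toLinearMap
  obtain ⟨K, hTK, hker⟩ := exists_sup_eq_top_and_inf_le_ker f T
  exact ⟨K, hTK, fun x hx ↦
    Ideal.Quotient.eq_zero_iff_mem.mp (MulOpposite.op_injective (hker hx))⟩

theorem hasWeakSupplementRight_of_isSemilocalRing (h : IsSemilocalRing R)
    (T : Submodule Rᵐᵒᵖ R) : HasWeakSupplementRight R T := by
  have : IsSemisimpleModule R (R ⧸ Ideal.jacobson (⊥ : Ideal R)) := h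
  have := isSemisimpleRing_quotient_of_isSemisimpleModule (Ideal.jacobson (⊥ : Ideal R))
  obtain ⟨K, hTK, hJ⟩ :=
    exists_rightIdeal_sup_eq_top_and_inf_subset (Ideal.jacobson (⊥ : Ideal R)) T
  exact ⟨K, hTK, isSmallRightIdeal_of_subset_jacobson_bot hJ⟩

theorem rAnn_lAnn_eq_of_sup_eq_top {T K : Submodule Rᵐᵒᵖ R} (hTK : T ⊔ K = ⊤)
    (hinf : rAnn R (lAnn R ((T ⊓ K : Submodule Rᵐᵒᵖ R) : Set R)) =
      ((T ⊓ K : Submodule Rᵐᵒᵖ R) : Set R)) :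
    rAnn R (lAnn R (T : Set R)) = (T : Set R) := by
  obtain ⟨a, ha, b, hb, hab⟩ :=
    Submodule.mem_sup.mp (hTK ▸ Submodule.mem_top : (1 : R) ∈ T ⊔ K)
  have split (x : R) : a * x + b * x = x := by rw [← add_mul, hab, one_mul]
  have hbT : ∀ t ∈ T, b * t ∈ T ⊓ K := fun t ht ↦
    ⟨(T.add_mem_iff_right (rightIdeal_mul_mem_right T ha t)).mp ((split t).symm ▸ ht),
      rightIdeal_mul_mem_right K hb t⟩
  refine (subset_rAnn_lAnn (T : Set R)).antisymm' fun x hx ↦ ?_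
  have hbx : b * x ∈ rAnn R (lAnn R ((T ⊓ K : Submodule Rᵐᵒᵖ R) : Set R)) := by
    intro r hr
    have hrb : r * b ∈ lAnn R (T : Set R) := fun t ht ↦
      (mul_assoc r b t).trans (hr _ (hbT t ht))
    exact (mul_assoc r b x).symm.trans (hx _ hrb)
  rw [hinf] at hbx
  exact split x ▸ T.add_mem (rightIdeal_mul_mem_right T ha x) hbx.1

end

theorem semiperfect_small_dual_implies_dual_general (R : Type*) [Ring R]
    (h : IsSemilocalRing R)
    (hsd : ∀ K : Submodule Rᵐᵒᵖ R, IsSmallRightIdeal R K →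
      rAnn R (lAnn R (K : Set R)) = (K : Set R)) :
    ∀ T : Submodule Rᵐᵒᵖ R, rAnn R (lAnn R (T : Set R)) = (T : Set R) := by
  intro T
  obtain ⟨K, hTK, hsmall⟩ := hasWeakSupplementRight_of_isSemilocalRing h T
  exact rAnn_lAnn_eq_of_sup_eq_top hTK (hsd _ hsmall)

/-- If `R` is semiperfect and `rl(K) = K` for every small right ideal
`K`, then `rl(T) = T` for every right ideal `T`. -/
theorem semiperfect_small_dual_implies_dual (R : Type*) [Ring R]
    (h : IsSemiperfectRing R)
    (hsd : ∀ K : Submodule Rᵐᵒᵖ R, IsSmallRightIdeal R K →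
      rAnn R (lAnn R (K : Set R)) = (K : Set R)) :
    ∀ T : Submodule Rᵐᵒᵖ R, rAnn R (lAnn R (T : Set R)) = (T : Set R) :=
  semiperfect_small_dual_implies_dual_general R h.1 hsd
end

section
/- For a ring R the following are equivalent: (1) R is J-regular, i.e., R/J(R) is von Neumann regular; (2) every principal right ideal of R has a weak supplement in R; (3) every finitely generated right ideal of R has a weak supplement in R. -/
open Pointwise

/-!
A right ideal is small exactly when it lies in `J(R)`. If `I + K = R` with `I ∩ K` small, write
`1 = e + k` with `e ∈ I` and `k ∈ K`; for `x ∈ I` the element `x - e x = k x` lies in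
`I ∩ K ⊆ J(R)`, so `e` is a left identity of `I` modulo `J(R)`. Conversely, for such an `e`, the
right ideal `(1 - e)R` is a weak supplement of `I`. Hence `I` has a weak supplement iff its
image in `R/J(R)` is generated by an idempotent, and the theorem becomes von Neumann's:
principal right ideals are generated by idempotents exactly in regular rings, and there finitely
generated right ideals are too.
-/

section RightIdeal

variable {R : Type*} [Ring R] {I : Submodule Rᵐᵒᵖ R} {a x : R}

theorem mul_mem_rightIdeal (hx : x ∈ I) (r : R) : x * r ∈ I :=
  I.smul_mem (MulOpposite.op r) hx

theorem rightIdeal_eq_top_iff_one_mem : I = ⊤ ↔ (1 : R) ∈ I :=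
  ⟨fun h => h ▸ Submodule.mem_top,
    fun h => Submodule.eq_top_iff'.2 fun x => one_mul x ▸ mul_mem_rightIdeal h x⟩

theorem mem_rightIdeal_span_singleton :
    x ∈ Submodule.span Rᵐᵒᵖ {a} ↔ ∃ r, a * r = x :=
  Submodule.mem_span_singleton.trans MulOpposite.op_surjective.exists

end RightIdeal

section Jacobson

variable {R : Type*} [Ring R] {x : R}

theorem exists_one_add_mul_eq_one_of_mem_jacobson_bot (hx : x ∈ Ideal.jacobson (⊥ : Ideal R)) :
    ∃ z, (1 + x) * z = 1 := by
  have exists_left_inv : ∀ w ∈ Ideal.jacobson (⊥ : Ideal R), ∃ z, z * (1 + w) = 1 := by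
    intro w hw
    obtain ⟨z, hz⟩ := Ideal.exists_mul_add_sub_mem_of_mem_jacobson w hw
    exact ⟨z, add_comm w 1 ▸ sub_eq_zero.1 hz⟩
  obtain ⟨z, hz⟩ := exists_left_inv x hx
  have z_eq : z = 1 + -(z * x) := by rw [← hz]; noncomm_ring
  obtain ⟨v, hv⟩ := exists_left_inv (-(z * x)) (neg_mem (Ideal.mul_mem_left _ z hx))
  rw [← z_eq] at hv
  exact ⟨z, left_inv_eq_right_inv hv hz ▸ hv⟩

theorem mem_jacobson_bot_of_forall_exists_mul_eq_one (h : ∀ y, ∃ z, (1 + x * y) * z = 1) :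
    x ∈ Ideal.jacobson (⊥ : Ideal R) := by
  refine Ideal.mem_jacobson_iff.2 fun y => ?_
  obtain ⟨s, hs⟩ := h y
  have s_eq : s = 1 + x * -(y * s) := by rw [← hs]; noncomm_ring
  obtain ⟨t, ht⟩ := h (-(y * s))
  rw [← s_eq] at ht
  have left_inv : s * (1 + x * y) = 1 := left_inv_eq_right_inv hs ht ▸ ht
  refine ⟨1 - y * s * x, (Submodule.mem_bot R).2 ?_⟩
  calc (1 - y * s * x) * y * x + (1 - y * s * x) - 1
      = y * (1 - s * (1 + x * y)) * x := by noncomm_ring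
    _ = 0 := by rw [left_inv, sub_self, mul_zero, zero_mul]

theorem isSmallRightIdeal_iff_forall_mem_jacobson {I : Submodule Rᵐᵒᵖ R} :
    IsSmallRightIdeal R I ↔ ∀ x ∈ I, x ∈ Ideal.jacobson (⊥ : Ideal R) := by
  constructor
  · intro hI x hx
    refine mem_jacobson_bot_of_forall_exists_mul_eq_one fun y => ?_
    have sup_eq_top : I ⊔ Submodule.span Rᵐᵒᵖ {1 + x * y} = ⊤ :=
      rightIdeal_eq_top_iff_one_mem.2 <| Submodule.mem_sup.2
        ⟨-(x * y), neg_mem (mul_mem_rightIdeal hx y), 1 + x * y,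
          Submodule.mem_span_singleton_self _, by abel⟩
    have span_eq_top := not_not.1 fun hne => hI _ hne sup_eq_top
    exact mem_rightIdeal_span_singleton.1 (rightIdeal_eq_top_iff_one_mem.1 span_eq_top)
  · intro hI K hK hsup
    obtain ⟨x, hx, k, hk, hxk⟩ := Submodule.mem_sup.1 (rightIdeal_eq_top_iff_one_mem.1 hsup)
    obtain ⟨z, hz⟩ := exists_one_add_mul_eq_one_of_mem_jacobson_bot (neg_mem (hI x hx))
    have k_eq : k = 1 + -x := by rw [← hxk]; abel
    exact hK (rightIdeal_eq_top_iff_one_mem.2 (hz ▸ k_eq ▸ mul_mem_rightIdeal hk z))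

end Jacobson

/-- The element `e` of the right ideal `I` is a left identity of `I` modulo `J`. When `J` is
two-sided, this says that the image of `e` in `R/J` is an idempotent generating the image of `I`. -/
structure IsLeftIdentityMod {R : Type*} [Ring R] (J : Ideal R) (I : Submodule Rᵐᵒᵖ R) (e : R) :
    Prop where
  mem : e ∈ I
  mul_sub_mem : ∀ x ∈ I, e * x - x ∈ J

section LeftIdentity

variable {R : Type*} [Ring R] {J : Ideal R} [J.IsTwoSided] {I₁ I₂ : Submodule Rᵐᵒᵖ R}

theorem exists_isLeftIdentityMod_span_singleton_iff {a : R} :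
    (∃ e, IsLeftIdentityMod J (Submodule.span Rᵐᵒᵖ {a}) e) ↔ ∃ b, a * b * a - a ∈ J := by
  constructor
  · rintro ⟨e, he⟩
    obtain ⟨b, rfl⟩ := mem_rightIdeal_span_singleton.1 he.mem
    exact ⟨b, he.mul_sub_mem a (Submodule.mem_span_singleton_self a)⟩
  · rintro ⟨b, hb⟩
    refine ⟨a * b, mem_rightIdeal_span_singleton.2 ⟨b, rfl⟩, fun x hx => ?_⟩
    obtain ⟨r, rfl⟩ := mem_rightIdeal_span_singleton.1 hx
    have : a * b * (a * r) - a * r = (a * b * a - a) * r := by noncomm_ring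
    exact this ▸ Ideal.mul_mem_right r J hb

-- Modulo `J`, `I₁ + I₂ = eR + gR` with `g = (1 - e)f`, and `gb` is an idempotent generating `gR`;
-- the factor `1 - e` makes the correction to `e` vanish on `I₁`.
theorem IsLeftIdentityMod.sup {e f b : R} (he : IsLeftIdentityMod J I₁ e)
    (hf : IsLeftIdentityMod J I₂ f) (hb : (f - e * f) * b * (f - e * f) - (f - e * f) ∈ J) :
    IsLeftIdentityMod J (I₁ ⊔ I₂) (e + (f - e * f) * b * (1 - e)) := by
  set g := f - e * f with g_def
  have g_mem : g ∈ I₁ ⊔ I₂ :=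
    sub_mem (Submodule.mem_sup_right hf.mem)
      (Submodule.mem_sup_left (mul_mem_rightIdeal he.mem f))
  refine ⟨add_mem (Submodule.mem_sup_left he.mem)
    (mul_mem_rightIdeal (mul_mem_rightIdeal g_mem b) _), fun x hx => ?_⟩
  obtain ⟨y, hy, z, hz, rfl⟩ := Submodule.mem_sup.1 hx
  have y_part : (1 - g * b) * (e * y - y) ∈ J := J.mul_mem_left _ (he.mul_sub_mem y hy)
  have z_part : (1 - g * b) * (1 - e) * (f * z - z) ∈ J :=
    J.mul_mem_left _ (hf.mul_sub_mem z hz)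
  have g_part : (g * b * g - g) * z ∈ J := J.mul_mem_right z hb
  have decomposition : (e + g * b * (1 - e)) * (y + z) - (y + z) =
      (1 - g * b) * (e * y - y) + (1 - g * b) * (1 - e) * (f * z - z) + (g * b * g - g) * z := by
    rw [g_def]
    noncomm_ring
  exact decomposition ▸ add_mem (add_mem y_part z_part) g_part

theorem exists_isLeftIdentityMod_of_fg (hJ : ∀ a : R, ∃ b, a * b * a - a ∈ J)
    {I : Submodule Rᵐᵒᵖ R} (hI : I.FG) : ∃ e, IsLeftIdentityMod J I e := by
  induction I, hI using Submodule.fg_induction with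
  | singleton a => exact exists_isLeftIdentityMod_span_singleton_iff.2 (hJ a)
  | sup I₁ I₂ _ _ ih₁ ih₂ =>
    obtain ⟨e, he⟩ := ih₁
    obtain ⟨f, hf⟩ := ih₂
    obtain ⟨b, hb⟩ := hJ (f - e * f)
    exact ⟨_, he.sup hf hb⟩

end LeftIdentity

section WeakSupplement

variable {R : Type*} [Ring R] {I : Submodule Rᵐᵒᵖ R}

theorem IsLeftIdentityMod.hasWeakSupplementRight {e : R}
    (he : IsLeftIdentityMod (Ideal.jacobson ⊥) I e) : HasWeakSupplementRight R I := by
  refine ⟨Submodule.span Rᵐᵒᵖ {1 - e}, ?_, isSmallRightIdeal_iff_forall_mem_jacobson.2 ?_⟩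
  · exact rightIdeal_eq_top_iff_one_mem.2 <| Submodule.mem_sup.2
      ⟨e, he.mem, 1 - e, Submodule.mem_span_singleton_self _, add_sub_cancel e 1⟩
  · rintro x ⟨hxI, hxK⟩
    obtain ⟨r, rfl⟩ := mem_rightIdeal_span_singleton.1 hxK
    have e_mul_mem : (e * e - e) * r ∈ Ideal.jacobson (⊥ : Ideal R) :=
      Ideal.mul_mem_right r _ (he.mul_sub_mem e he.mem)
    convert neg_mem (add_mem (he.mul_sub_mem _ hxI) e_mul_mem) using 1
    noncomm_ring

theorem HasWeakSupplementRight.exists_isLeftIdentityMod (hI : HasWeakSupplementRight R I) :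
    ∃ e, IsLeftIdentityMod (Ideal.jacobson ⊥) I e := by
  obtain ⟨K, hsup, hinf⟩ := hI
  obtain ⟨e, he, k, hk, hek⟩ := Submodule.mem_sup.1 (rightIdeal_eq_top_iff_one_mem.1 hsup)
  refine ⟨e, he, fun x hx => isSmallRightIdeal_iff_forall_mem_jacobson.1 hinf _ ⟨?_, ?_⟩⟩
  · exact sub_mem (mul_mem_rightIdeal he x) hx
  · have : e * x - x = -(k * x) := by rw [eq_sub_of_add_eq hek]; noncomm_ring
    exact this ▸ neg_mem (mul_mem_rightIdeal hk x)

theorem hasWeakSupplementRight_iff_exists_isLeftIdentityMod :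
    HasWeakSupplementRight R I ↔ ∃ e, IsLeftIdentityMod (Ideal.jacobson ⊥) I e :=
  ⟨fun hI => hI.exists_isLeftIdentityMod, fun ⟨_, he⟩ => he.hasWeakSupplementRight⟩

theorem hasWeakSupplementRight_span_singleton_iff {a : R} :
    HasWeakSupplementRight R (Submodule.span Rᵐᵒᵖ {a}) ↔
      ∃ b, a * b * a - a ∈ Ideal.jacobson (⊥ : Ideal R) :=
  hasWeakSupplementRight_iff_exists_isLeftIdentityMod.trans
    exists_isLeftIdentityMod_span_singleton_iff

end WeakSupplement

/-- `R` is `J`-regular iff every principal right ideal has a weak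
supplement iff every finitely generated right ideal has a weak supplement. -/
theorem jRegular_tfae_weakSupplements (R : Type*) [Ring R] :
    [ IsJRegular R,
      ∀ a : R, HasWeakSupplementRight R (Submodule.span Rᵐᵒᵖ {a}),
      ∀ I : Submodule Rᵐᵒᵖ R, I.FG → HasWeakSupplementRight R I ].TFAE := by
  tfae_have 1 ↔ 2 := forall_congr' fun _ => hasWeakSupplementRight_span_singleton_iff.symm
  tfae_have 1 → 3 := fun hR _ hI =>
    hasWeakSupplementRight_iff_exists_isLeftIdentityMod.2 (exists_isLeftIdentityMod_of_fg hR hI)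
  tfae_have 3 → 2 := fun h a => h _ (Submodule.fg_span_singleton a)
  tfae_finish
end

section
/- Let R be a ring and b, r_1, …, r_n, a_1, …, a_n ∈ R such that b + a_1·r_1 + ⋯ + a_n·r_n = 1. Then bR ∩ (a_1R + ⋯ + a_nR) = b·a_1R + ⋯ + b·a_nR. -/
open Pointwise

/-!
Let `I` be a right ideal containing `1 - b`. Then `x - b * x = (1 - b) * x ∈ I` for every `x`, so
left multiplication by `b`, a right `R`-linear map, induces the identity on `R ⧸ I`. Hence
`b * x ∈ I` if and only if `x ∈ I`, which gives `bR ∩ I = bI`.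
-/

lemma comap_eq_of_forall_sub_apply_mem {S M : Type*} [Ring S] [AddCommGroup M] [Module S M]
    {f : M →ₗ[S] M} {N : Submodule S M} (hf : ∀ x, x - f x ∈ N) : N.comap f = N := by
  ext x
  simpa only [Submodule.mem_comap, sub_sub_cancel] using N.sub_mem_iff_left (x := x) (hf x)

lemma range_inf_eq_map_of_forall_sub_apply_mem {S M : Type*} [Ring S] [AddCommGroup M]
    [Module S M] {f : M →ₗ[S] M} {N : Submodule S M} (hf : ∀ x, x - f x ∈ N) :
    LinearMap.range f ⊓ N = N.map f := by
  rw [← Submodule.map_comap_eq, comap_eq_of_forall_sub_apply_mem hf]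

lemma range_mulLeft_eq_span_singleton {R : Type*} [Semiring R] (b : R) :
    LinearMap.range (LinearMap.mulLeft Rᵐᵒᵖ b) = Submodule.span Rᵐᵒᵖ {b} := by
  ext x
  simp [Submodule.mem_span_singleton, MulOpposite.op_surjective.exists]

lemma span_singleton_inf_eq_map_mulLeft {R : Type*} [Ring R] {b : R} {I : Submodule Rᵐᵒᵖ R}
    (hb : 1 - b ∈ I) :
    Submodule.span Rᵐᵒᵖ {b} ⊓ I = I.map (LinearMap.mulLeft Rᵐᵒᵖ b) := by
  rw [← range_mulLeft_eq_span_singleton]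
  refine range_inf_eq_map_of_forall_sub_apply_mem fun x => ?_
  simpa [sub_mul] using I.smul_mem (MulOpposite.op x) hb

lemma sum_mul_mem_iSup_span_singleton {R ι : Type*} [Semiring R] [Fintype ι] (a r : ι → R) :
    ∑ i, a i * r i ∈ ⨆ i, Submodule.span Rᵐᵒᵖ {a i} :=
  Submodule.sum_mem _ fun i _ => Submodule.mem_iSup_of_mem i <|
    Submodule.smul_mem _ (MulOpposite.op (r i)) (Submodule.mem_span_singleton_self (a i))

theorem span_inf_eq_iSup_span_general {R : Type*} {ι : Sort*} [Ring R] {b : R} {a : ι → R}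
    (hb : 1 - b ∈ ⨆ i, Submodule.span Rᵐᵒᵖ {a i}) :
    Submodule.span Rᵐᵒᵖ {b} ⊓ (⨆ i, Submodule.span Rᵐᵒᵖ {a i}) =
      ⨆ i, Submodule.span Rᵐᵒᵖ {b * a i} := by
  simp only [span_singleton_inf_eq_map_mulLeft hb, Submodule.map_iSup, Submodule.map_span,
    Set.image_singleton, LinearMap.mulLeft_apply]

/-- If `b + a₁r₁ + ⋯ + aₙrₙ = 1`, then
`bR ∩ (a₁R + ⋯ + aₙR) = ba₁R + ⋯ + baₙR`. -/
theorem span_inf_eq_iSup_span (R : Type*) [Ring R] (n : ℕ) (b : R) (a r : Fin n → R)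
    (h : b + ∑ i, a i * r i = 1) :
    Submodule.span Rᵐᵒᵖ {b} ⊓ (⨆ i, Submodule.span Rᵐᵒᵖ {a i}) =
      ⨆ i, Submodule.span Rᵐᵒᵖ ({b * a i} : Set R) :=
  span_inf_eq_iSup_span_general (eq_sub_of_add_eq' h ▸ sum_mul_mem_iSup_span_singleton a r)
end
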